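/- arXiv:1802.01094 — 8 statements merged into one kernel-verified Lean document; each statement's English description precedes it below -/
import Mathlib

section
/- Let n ∈ ℕ, let U ⊆ ℝⁿ be an open subset whose complement ℝⁿ \ U is nonempty, and let f be a Schwartz function on ℝⁿ with f(z) = 0 for every z ∈ ℝⁿ \ U. Then the following are equivalent: (1) for every z ∈ ℝⁿ \ U and every k ∈ ℕ the k-th iterated derivative of f at z is zero (f is flat at ℝⁿ \ U); (2) for every m ∈ ℕ one has sup_{x ∈ U} |f(x)| / dist(x, ℝⁿ \ U)^m < ∞. -/
theorem aux_lip {E F : Type*} [NormedAddCommGroup E] [NormedSpace ℝ E]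
    [NormedAddCommGroup F] [NormedSpace ℝ F] (g : E → F) (hg : Differentiable ℝ g)
    (M1 : ℝ) (M2 : ℝ) (h1 : ∀ x, ‖fderiv ℝ g x‖ ≤ M1)
    (h2 : ∀ x y, ‖fderiv ℝ g y - fderiv ℝ g x‖ ≤ M2 * ‖y - x‖) (hM2 : 0 ≤ M2) (z : E)
    (hP : ∀ m : ℕ, ∃ C : ℝ, 0 ≤ C ∧ ∀ ρ > 0, ∀ x, ‖x - z‖ ≤ ρ → ‖g x‖ ≤ C * ρ ^ m) :
    ∀ m : ℕ, ∃ C : ℝ, 0 ≤ C ∧ ∀ ρ > 0, ∀ x, ‖x - z‖ ≤ ρ → ‖fderiv ℝ g x‖ ≤ C * ρ ^ m := by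
  intro m
  obtain ⟨C, hC, hb⟩ := hP (2 * (m + 1))
  have hM1 : 0 ≤ M1 := (norm_nonneg _).trans (h1 z)
  refine ⟨C * 2 ^ (2 * (m + 1)) + C + M2 + M1, by positivity, ?_⟩
  intro ρ hρ x hx
  rcases le_total ρ 1 with h | h
  · have hh0 : 0 < ρ ^ (m + 1) := by positivity
    have hhle : ρ ^ (m + 1) ≤ ρ := by
      simpa using pow_le_pow_of_le_one hρ.le h (show 1 ≤ m + 1 by omega)
    have hhle' : ρ ^ (m + 1) ≤ ρ ^ m := pow_le_pow_of_le_one hρ.le h (by omega)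
    have key : ‖fderiv ℝ g x‖ ≤ (C * 2 ^ (2 * (m + 1)) + C + M2) * ρ ^ (m + 1) := by
      refine ContinuousLinearMap.opNorm_le_of_unit_norm (by positivity) ?_
      intro v hv
      set t := ρ ^ (m + 1) with ht
      have hn : ‖t • v‖ = t := by rw [norm_smul, hv, Real.norm_of_nonneg hh0.le, mul_one]
      have e1 : ‖g (x + t • v) - g x - fderiv ℝ g x ((x + t • v) - x)‖
          ≤ (M2 * t) * ‖(x + t • v) - x‖ := by
        refine (convex_closedBall x t).norm_image_sub_le_of_norm_fderiv_le' (𝕜 := ℝ)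
          (fun y _ => hg y) ?_ (Metric.mem_closedBall_self hh0.le) ?_
        · intro y hy
          refine (h2 x y).trans ?_
          rw [mem_closedBall_iff_norm] at hy
          gcongr
        · rw [mem_closedBall_iff_norm]; simp [hn]
      rw [add_sub_cancel_left, hn, map_smul] at e1
      have e2 := hb ρ hρ x hx
      have e3 := hb (2 * ρ) (by positivity) (x + t • v) (by
        calc ‖x + t • v - z‖ = ‖(x - z) + t • v‖ := by congr 1; abel
          _ ≤ ‖x - z‖ + ‖t • v‖ := norm_add_le _ _
          _ ≤ 2 * ρ := by rw [hn]; linarith)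
      have e4 : ‖t • fderiv ℝ g x v‖ ≤ ‖g (x + t • v)‖ + ‖g x‖
          + ‖g (x + t • v) - g x - t • fderiv ℝ g x v‖ := by
        calc ‖t • fderiv ℝ g x v‖ = ‖(g (x + t • v) - g x) -
              (g (x + t • v) - g x - t • fderiv ℝ g x v)‖ := by congr 1; abel
          _ ≤ _ := (norm_sub_le _ _).trans (by gcongr; exact norm_sub_le _ _)
      rw [norm_smul, Real.norm_of_nonneg hh0.le] at e4
      have e5 : ρ ^ (2 * (m + 1)) = t * t := by rw [ht]; ring
      rw [mul_pow, e5] at e3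
      rw [e5] at e2
      rw [← mul_le_mul_iff_right₀ hh0]
      nlinarith
    refine key.trans ?_
    calc _ ≤ (C * 2 ^ (2 * (m + 1)) + C + M2) * ρ ^ m := by gcongr
      _ ≤ _ := mul_le_mul_of_nonneg_right (by linarith) (by positivity)
  · have : 1 ≤ ρ ^ m := one_le_pow₀ h
    have h0 : 0 ≤ C * 2 ^ (2 * (m + 1)) + C + M2 := by positivity
    refine (h1 x).trans ?_
    nlinarith

theorem aux_sub {E F : Type*} [NormedAddCommGroup E] [NormedSpace ℝ E]
    [NormedAddCommGroup F] [NormedSpace ℝ F] (f : SchwartzMap E F) (k : ℕ) :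
    Differentiable ℝ (iteratedFDeriv ℝ k f) :=
  (f.smooth (k + 1)).differentiable_iteratedFDeriv (by exact_mod_cast Nat.lt_succ_self k)

theorem aux_bdd {E F : Type*} [NormedAddCommGroup E] [NormedSpace ℝ E]
    [NormedAddCommGroup F] [NormedSpace ℝ F] (f : SchwartzMap E F) (k : ℕ) :
    ∃ C, 0 ≤ C ∧ ∀ x, ‖iteratedFDeriv ℝ k f x‖ ≤ C := by
  obtain ⟨C, hC⟩ := f.decay 0 k
  exact ⟨C, (norm_nonneg _).trans (by simpa using hC.2 0), by simpa using hC.2⟩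

theorem aux_flat {E F : Type*} [NormedAddCommGroup E] [NormedSpace ℝ E]
    [NormedAddCommGroup F] [NormedSpace ℝ F] (f : SchwartzMap E F) (z : E)
    (hP : ∀ m : ℕ, ∃ C : ℝ, 0 ≤ C ∧ ∀ ρ > 0, ∀ x, ‖x - z‖ ≤ ρ → ‖f x‖ ≤ C * ρ ^ m) (k : ℕ) :
    ∀ m : ℕ, ∃ C : ℝ, 0 ≤ C ∧ ∀ ρ > 0, ∀ x, ‖x - z‖ ≤ ρ →
      ‖iteratedFDeriv ℝ k f x‖ ≤ C * ρ ^ m := by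
  induction k with
  | zero => simpa using hP
  | succ k ih =>
    obtain ⟨M1, -, h1⟩ := aux_bdd f (k + 1)
    obtain ⟨M2, hM2, h2⟩ := aux_bdd f (k + 2)
    have := aux_lip (iteratedFDeriv ℝ k f) (aux_sub f k) M1 M2
      (by simpa [norm_fderiv_iteratedFDeriv] using h1) ?_ hM2 z ih
    · simpa [norm_fderiv_iteratedFDeriv] using this
    · intro x y
      have e : ‖iteratedFDeriv ℝ (k + 1) f y - iteratedFDeriv ℝ (k + 1) f x‖ ≤ M2 * ‖y - x‖ :=
        convex_univ.norm_image_sub_le_of_norm_fderiv_le (𝕜 := ℝ)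
          (fun y _ => aux_sub f (k + 1) y)
          (fun y _ => by rw [norm_fderiv_iteratedFDeriv]; exact h2 y) trivial trivial
      rw [iteratedFDeriv_succ_eq_comp_left] at e
      simp only [Function.comp_apply] at e
      rw [← dist_eq_norm (fderiv ℝ _ y)]
      rw [← dist_eq_norm] at e
      exact (LinearIsometryEquiv.dist_map _ _ _).symm.le.trans e

theorem aux_fwd {E F : Type*} [NormedAddCommGroup E] [NormedSpace ℝ E]
    [NormedAddCommGroup F] [NormedSpace ℝ F] (f : SchwartzMap E F) (z : E)
    (hz : ∀ k : ℕ, iteratedFDeriv ℝ k f z = 0) (C : ℝ) (hC : 0 ≤ C) (j : ℕ) :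
    ∀ k : ℕ, (∀ x, ‖iteratedFDeriv ℝ (k + j) f x‖ ≤ C) →
      ∀ x, ‖iteratedFDeriv ℝ k f x‖ ≤ C * ‖x - z‖ ^ j := by
  induction j with
  | zero => intro k h x; simpa using h x
  | succ j ih =>
    intro k h x
    have h' := ih (k + 1) (by intro x; rw [show k + 1 + j = k + (j + 1) by omega]; exact h x)
    have e : ‖iteratedFDeriv ℝ k f x - iteratedFDeriv ℝ k f z‖
        ≤ (C * ‖x - z‖ ^ j) * ‖x - z‖ := by
      refine (convex_closedBall z ‖x - z‖).norm_image_sub_le_of_norm_fderiv_le (𝕜 := ℝ)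
          (fun y _ => aux_sub f k y) (fun y hy => ?_)
          (Metric.mem_closedBall_self (norm_nonneg _)) (mem_closedBall_iff_norm.2 le_rfl)
      rw [norm_fderiv_iteratedFDeriv]
      refine (h' y).trans ?_
      rw [mem_closedBall_iff_norm] at hy
      gcongr
    rw [hz k, sub_zero] at e
    rw [pow_succ, ← mul_assoc]; exact e

/-- Let `U ⊆ ℝⁿ` be open with nonempty complement, and let `f` be a
Schwartz function on `ℝⁿ` vanishing on `ℝⁿ \ U`. Then `f` is flat at `ℝⁿ \ U`
(all iterated derivatives vanish there) iff for every `m` the quantity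
`|f x| / dist(x, ℝⁿ \ U)^m` is bounded on `U`. -/
theorem stmt_0 (n : ℕ) (U : Set (EuclideanSpace ℝ (Fin n))) (hU : IsOpen U)
    (hUc : Uᶜ.Nonempty) (f : SchwartzMap (EuclideanSpace ℝ (Fin n)) ℝ)
    (hf0 : ∀ z ∉ U, f z = 0) :
    (∀ z ∉ U, ∀ k : ℕ, iteratedFDeriv ℝ k f z = 0) ↔
      (∀ m : ℕ, ∃ C : ℝ, ∀ x ∈ U, |f x| / Metric.infDist x Uᶜ ^ m ≤ C) := by
  have hpos : ∀ x ∈ U, 0 < Metric.infDist x Uᶜ := fun x hx =>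
    (hU.isClosed_compl.notMem_iff_infDist_pos hUc).1 (by simpa using hx)
  constructor
  · intro h m
    obtain ⟨C, hC, hb⟩ := aux_bdd f m
    refine ⟨C, fun x hx => ?_⟩
    rw [div_le_iff₀ (pow_pos (hpos x hx) m)]
    obtain ⟨z, hz, hd⟩ := hU.isClosed_compl.exists_infDist_eq_dist hUc x
    have := aux_fwd f z (h z hz) C hC m 0 (by rw [Nat.zero_add]; exact hb) x
    rw [hd, dist_eq_norm]
    simpa using this
  · intro h z hz k
    have hP : ∀ m : ℕ, ∃ C : ℝ, 0 ≤ C ∧ ∀ ρ > 0, ∀ x, ‖x - z‖ ≤ ρ → ‖f x‖ ≤ C * ρ ^ m := by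
      intro m
      obtain ⟨C, hC⟩ := h m
      refine ⟨max C 0, le_max_right _ _, fun ρ hρ x hx => ?_⟩
      by_cases hxU : x ∈ U
      · have e := hC x hxU
        rw [div_le_iff₀ (pow_pos (hpos x hxU) m)] at e
        have hd : Metric.infDist x Uᶜ ≤ ρ :=
          (Metric.infDist_le_dist_of_mem (show z ∈ Uᶜ from hz)).trans (by rwa [dist_eq_norm])
        have h0 := (hpos x hxU).le
        rw [Real.norm_eq_abs]
        refine e.trans ?_
        calc _ ≤ max C 0 * Metric.infDist x Uᶜ ^ m := by gcongr; exact le_max_left _ _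
          _ ≤ _ := by gcongr
      · rw [hf0 x hxU, norm_zero]; positivity
    obtain ⟨C, hC, hb⟩ := aux_flat f z hP k 1
    rw [← norm_le_zero_iff]
    refine le_of_forall_pos_le_add fun ε hε => ?_
    have := hb (ε / (C + 1)) (by positivity) z (by simp; positivity)
    refine this.trans ?_
    rw [pow_one, zero_add, mul_div_assoc', div_le_iff₀ (by positivity)]
    nlinarith
end

section
/- Let n ∈ ℕ, let U ⊆ ℝⁿ be an open subset, and let t : U → ℝ be a tempered function on U such that there exists c > 0 with t(x) ≥ c for all x ∈ U. Then the function x ↦ 1/t(x) is a tempered function on U. -/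
/-- A smooth function `t` on an open `U ⊆ ℝⁿ` is tempered:
(1) near every boundary point its derivatives grow at most like a negative power of the
distance to `ℝⁿ \ U`; (2) at infinity its derivatives are polynomially bounded. -/
def IsTemperedOn {n : ℕ} (U : Set (EuclideanSpace ℝ (Fin n)))
    (t : EuclideanSpace ℝ (Fin n) → ℝ) : Prop :=
  (∀ α : ℕ, ∀ x₀ ∉ U, ∃ V : Set (EuclideanSpace ℝ (Fin n)), IsOpen V ∧ x₀ ∈ V ∧
      ∃ (m : ℕ) (C : ℝ), ∀ x ∈ U ∩ V,
        ‖iteratedFDerivWithin ℝ α t U x‖ * Metric.infDist x Uᶜ ^ m ≤ C) ∧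
  (∀ α : ℕ, ∃ (m : ℕ) (r : ℝ), 0 < r ∧ ∀ x ∈ U, r < ‖x‖ →
      ‖iteratedFDerivWithin ℝ α t U x‖ < ‖x‖ ^ m)

open scoped Nat in
theorem aux_inv (c : ℝ) (hc : 0 < c) (k : ℕ) (y : ℝ) (hy : c ≤ y) :
    ‖iteratedFDerivWithin ℝ k (fun y : ℝ => 1 / y) (Set.Ioi 0) y‖ ≤ k ! * (c ^ (k + 1))⁻¹ := by
  have hy0 : 0 < y := lt_of_lt_of_le hc hy
  rw [norm_iteratedFDerivWithin_eq_norm_iteratedDerivWithin,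
    iteratedDerivWithin_one_div k isOpen_Ioi (Set.mem_Ioi.2 hy0)]
  have h : y ^ (-1 - k : ℤ) = (y ^ (k + 1))⁻¹ := by
    rw [← zpow_natCast, ← zpow_neg]
    congr 1
    push_cast
    ring
  simp only [h, norm_mul, norm_pow, norm_neg, norm_one, one_pow, one_mul, norm_inv]
  rw [Real.norm_of_nonneg hy0.le, Real.norm_of_nonneg (by positivity)]
  gcongr

open scoped Nat in
theorem aux_bound {n : ℕ} (U : Set (EuclideanSpace ℝ (Fin n))) (hU : IsOpen U)
    (t : EuclideanSpace ℝ (Fin n) → ℝ) (ht : ContDiffOn ℝ (⊤ : ℕ∞) t U)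
    (c : ℝ) (hc : 0 < c) (hct : ∀ x ∈ U, c ≤ t x) (k : ℕ) :
    ∃ K : ℝ, 0 ≤ K ∧ ∀ x ∈ U, ∀ B : ℝ, 1 ≤ B →
      (∀ i ≤ k, ‖iteratedFDerivWithin ℝ i t U x‖ ≤ B) →
      ‖iteratedFDerivWithin ℝ k (fun x => 1 / t x) U x‖ ≤ K * B ^ k := by
  refine ⟨k ! * ∑ i ∈ Finset.range (k + 1), (i ! : ℝ) * (c ^ (i + 1))⁻¹, by positivity, ?_⟩
  intro x hx B hB hi
  have hg : ContDiffOn ℝ (⊤ : ℕ∞) (fun y : ℝ => 1 / y) (Set.Ioi 0) :=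
    contDiffOn_const.div contDiffOn_id (fun y hy => ne_of_gt hy)
  refine norm_iteratedFDerivWithin_comp_le (g := fun y : ℝ => 1 / y) hg ht
    (by exact_mod_cast le_top) isOpen_Ioi.uniqueDiffOn hU.uniqueDiffOn
    (fun x hx => lt_of_lt_of_le hc (hct x hx)) hx ?_ ?_
  · intro i hik
    refine (aux_inv c hc i (t x) (hct x hx)).trans ?_
    exact Finset.single_le_sum (f := fun i : ℕ => (i ! : ℝ) * (c ^ (i + 1))⁻¹)
      (fun j _ => by positivity) (Finset.mem_range.2 (Nat.lt_succ_of_le hik))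
  · intro i h1 hik
    exact (hi i hik).trans (le_self_pow₀ hB (by omega))

/-- A tempered function on `U` which is bounded below by a positive
constant has tempered pointwise inverse. -/
theorem stmt_4 (n : ℕ) (U : Set (EuclideanSpace ℝ (Fin n))) (hU : IsOpen U)
    (t : EuclideanSpace ℝ (Fin n) → ℝ) (ht : ContDiffOn ℝ (⊤ : ℕ∞) t U)
    (htemp : IsTemperedOn U t) (c : ℝ) (hc : 0 < c) (hct : ∀ x ∈ U, c ≤ t x) :
    IsTemperedOn U (fun x => 1 / t x) := by
  obtain ⟨h1, h2⟩ := htemp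
  constructor
  · intro k x₀ hx₀
    obtain ⟨K, hK, hb⟩ := aux_bound U hU t ht c hc hct k
    choose V hVo hxV m C hC using fun i => h1 i x₀ hx₀
    set M := ∑ i ∈ Finset.range (k + 1), m i with hM
    set C' := 1 + ∑ i ∈ Finset.range (k + 1), |C i| with hC'
    have hC'1 : 1 ≤ C' := by
      have : 0 ≤ ∑ i ∈ Finset.range (k + 1), |C i| := Finset.sum_nonneg fun _ _ => abs_nonneg _
      linarith
    refine ⟨(⋂ i ∈ Finset.range (k + 1), V i) ∩ Metric.ball x₀ 1,
      (isOpen_biInter_finset fun i _ => hVo i).inter Metric.isOpen_ball,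
      ⟨Set.mem_iInter₂.2 fun i _ => hxV i, Metric.mem_ball_self one_pos⟩, M * k, K * C' ^ k, ?_⟩
    rintro x ⟨hxU, hxI, hxb⟩
    have hd1 : Metric.infDist x Uᶜ ≤ 1 :=
      (Metric.infDist_le_dist_of_mem (Set.mem_compl hx₀)).trans (Metric.mem_ball.1 hxb).le
    have hd0 : 0 < Metric.infDist x Uᶜ :=
      (hU.isClosed_compl.notMem_iff_infDist_pos ⟨x₀, hx₀⟩).1 (fun h => h hxU)
    set d := Metric.infDist x Uᶜ with hd
    have hdM : 0 < d ^ M := pow_pos hd0 M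
    have key := hb x hxU (C' / d ^ M)
      ((one_le_div hdM).2 ((pow_le_one₀ hd0.le hd1).trans hC'1)) (by
        intro i hik
        have hir : i ∈ Finset.range (k + 1) := Finset.mem_range.2 (Nat.lt_succ_of_le hik)
        rw [le_div_iff₀ hdM]
        have hm : m i ≤ M := Finset.single_le_sum (fun _ _ => Nat.zero_le _) hir
        have hCi : |C i| ≤ ∑ i ∈ Finset.range (k + 1), |C i| :=
          Finset.single_le_sum (f := fun i => |C i|) (fun _ _ => abs_nonneg _) hir
        have h3 := hC i x ⟨hxU, Set.mem_iInter₂.1 hxI i hir⟩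
        have h4 : ‖iteratedFDerivWithin ℝ i t U x‖ * d ^ M
            ≤ ‖iteratedFDerivWithin ℝ i t U x‖ * d ^ m i :=
          mul_le_mul_of_nonneg_left (pow_le_pow_of_le_one hd0.le hd1 hm) (norm_nonneg _)
        linarith [le_abs_self (C i)])
    rw [div_pow, ← pow_mul, ← mul_div_assoc, le_div_iff₀ (pow_pos hd0 _)] at key
    exact key
  · intro k
    obtain ⟨K, hK, hb⟩ := aux_bound U hU t ht c hc hct k
    choose m r hr hm using h2
    set M := ∑ i ∈ Finset.range (k + 1), m i with hM
    have hR : 0 ≤ ∑ i ∈ Finset.range (k + 1), r i := Finset.sum_nonneg fun i _ => (hr i).le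
    refine ⟨M * k + 1, 1 + K + ∑ i ∈ Finset.range (k + 1), r i, by linarith, ?_⟩
    intro x hxU hx
    have hx1 : 1 ≤ ‖x‖ := by linarith
    refine (hb x hxU (‖x‖ ^ M) (one_le_pow₀ hx1) ?_).trans_lt ?_
    · intro i hik
      have hir : i ∈ Finset.range (k + 1) := Finset.mem_range.2 (Nat.lt_succ_of_le hik)
      have hri : r i ≤ ∑ i ∈ Finset.range (k + 1), r i :=
        Finset.single_le_sum (fun i _ => (hr i).le) hir
      have hmi : m i ≤ M := Finset.single_le_sum (fun _ _ => Nat.zero_le _) hir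
      exact (hm i x hxU (by linarith)).le.trans (pow_le_pow_right₀ hx1 hmi)
    · rw [← pow_mul, pow_succ, mul_comm]
      have : 0 < ‖x‖ ^ (M * k) := by positivity
      exact mul_lt_mul_of_pos_left (by linarith) this
end

section
/- Let n ∈ ℕ, let U' ⊆ U ⊆ ℝⁿ be open subsets, let t : U → ℝ be a smooth function such that for every f ∈ 𝒮(U) the function equal to t·f on U and to 0 outside U lies in 𝒮(U), and suppose that the closure in U of the set {x ∈ U : t(x) ≠ 0} is contained in U'. Then for every s ∈ 𝒮(U), the function equal to t(x)·s(x) on U' and to 0 on ℝⁿ \ U' belongs to 𝒮(U'). -/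
/-- `f ∈ 𝒮(U)`: a Schwartz function on `ℝⁿ` which is flat at `ℝⁿ \ U`. -/
def SchwartzFlatOn {n : ℕ} (U : Set (EuclideanSpace ℝ (Fin n)))
    (f : SchwartzMap (EuclideanSpace ℝ (Fin n)) ℝ) : Prop :=
  ∀ z ∉ U, ∀ k : ℕ, iteratedFDeriv ℝ k (⇑f) z = 0

/-- Let `U' ⊆ U ⊆ ℝⁿ` be open, and let `t` be a smooth function on `U`
such that multiplication by `t` (and extension by zero) preserves `𝒮(U)`, whose support
(the closure in `U` of its non-vanishing locus) is contained in `U'`. Then for every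
`s ∈ 𝒮(U)`, the extension by zero of `(t·s)|_{U'}` belongs to `𝒮(U')`. -/
theorem stmt_5 (n : ℕ) (U U' : Set (EuclideanSpace ℝ (Fin n))) (hU : IsOpen U)
    (hU' : IsOpen U') (hsub : U' ⊆ U)
    (t : EuclideanSpace ℝ (Fin n) → ℝ) (ht : ContDiffOn ℝ (⊤ : ℕ∞) t U)
    (htemp : ∀ f : SchwartzMap (EuclideanSpace ℝ (Fin n)) ℝ, SchwartzFlatOn U f →
      ∃ g : SchwartzMap (EuclideanSpace ℝ (Fin n)) ℝ,
        (∀ x ∈ U, g x = t x * f x) ∧ (∀ x ∉ U, g x = 0) ∧ SchwartzFlatOn U g)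
    (hsupp : closure {x ∈ U | t x ≠ 0} ∩ U ⊆ U') :
    ∀ s : SchwartzMap (EuclideanSpace ℝ (Fin n)) ℝ, SchwartzFlatOn U s →
      ∃ g : SchwartzMap (EuclideanSpace ℝ (Fin n)) ℝ,
        (∀ x ∈ U', g x = t x * s x) ∧ (∀ x ∉ U', g x = 0) ∧ SchwartzFlatOn U' g := by
  intro s hs
  obtain ⟨g, hg1, hg2, hg3⟩ := htemp s hs
  have key : ∀ x ∈ U, x ∉ U' → (⇑g) =ᶠ[nhds x] (fun _ => (0 : ℝ)) := by
    intro x hxU hx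
    have hxc : x ∉ closure {x ∈ U | t x ≠ 0} := fun h => hx (hsupp ⟨h, hxU⟩)
    filter_upwards [hU.mem_nhds hxU, isClosed_closure.isOpen_compl.mem_nhds hxc] with y hyU hyc
    have hty : t y = 0 := by
      by_contra h
      exact hyc (subset_closure ⟨hyU, h⟩)
    rw [hg1 y hyU, hty, zero_mul]
  refine ⟨g, fun x hx => hg1 x (hsub hx), fun x hx => ?_, fun x hx k => ?_⟩
  · by_cases hxU : x ∈ U
    · exact (key x hxU hx).eq_of_nhds
    · exact hg2 x hxU
  · by_cases hxU : x ∈ U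
    · have h := ((key x hxU hx).iteratedFDeriv ℝ k).eq_of_nhds
      rw [h]
      simp
    · exact hg3 x hxU k
end

section
/- Let n ∈ ℕ and let Z ⊆ ℝⁿ be a closed subset. Then there exists a smooth function f : ℝⁿ → ℝ such that f(x) > 0 for every x ∉ Z, and f is flat at Z, i.e. for every z ∈ Z and every k ∈ ℕ the k-th iterated derivative of f at z is zero (in particular f vanishes on Z). -/
theorem flat_expNegInvGlue (k : ℕ) : iteratedFDeriv ℝ k expNegInvGlue 0 = 0 := by
  have hc : Continuous (iteratedFDeriv ℝ k expNegInvGlue) :=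
    (expNegInvGlue.contDiff (n := (⊤ : ℕ∞))).continuous_iteratedFDeriv (by exact_mod_cast le_top)
  have h0 : ∀ x ∈ Set.Iio (0 : ℝ), iteratedFDeriv ℝ k expNegInvGlue x = 0 := by
    intro x hx
    have : expNegInvGlue =ᶠ[nhds x] (fun _ => (0 : ℝ)) := by
      filter_upwards [Iio_mem_nhds hx] with y hy
      exact expNegInvGlue.zero_of_nonpos (le_of_lt hy)
    rw [(this.iteratedFDeriv ℝ k).eq_of_nhds]
    simp
  have hcl : IsClosed {x | iteratedFDeriv ℝ k expNegInvGlue x = 0} :=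
    isClosed_eq hc continuous_const
  have hsub : closure (Set.Iio (0 : ℝ)) ⊆ {x | iteratedFDeriv ℝ k expNegInvGlue x = 0} :=
    closure_minimal h0 hcl
  rw [closure_Iio] at hsub
  exact hsub (Set.mem_Iic.2 le_rfl)

/-- For every closed subset `Z ⊆ ℝⁿ` there is a smooth function
`f : ℝⁿ → ℝ` which is strictly positive off `Z` and flat at `Z` (all iterated
derivatives, including order `0`, vanish at every point of `Z`). -/
theorem stmt_9 (n : ℕ) (Z : Set (EuclideanSpace ℝ (Fin n))) (hZ : IsClosed Z) :
    ∃ f : EuclideanSpace ℝ (Fin n) → ℝ,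
      ContDiff ℝ (⊤ : ℕ∞) f ∧ (∀ x ∉ Z, 0 < f x) ∧
        ∀ z ∈ Z, ∀ k : ℕ, iteratedFDeriv ℝ k f z = 0 := by
  obtain ⟨g, hsupp, hg, hr⟩ := hZ.isOpen_compl.exists_contDiff_support_eq (n := (⊤ : ℕ∞))
  refine ⟨expNegInvGlue ∘ g, expNegInvGlue.contDiff.comp hg, ?_, ?_⟩
  · intro x hx
    apply expNegInvGlue.pos_of_pos
    have h1 : x ∈ Function.support g := by rw [hsupp]; exact hx
    have h2 : 0 ≤ g x := (hr (Set.mem_range_self x)).1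
    exact lt_of_le_of_ne h2 (Ne.symm h1)
  · intro z hz k
    have gz : g z = 0 := by
      by_contra h
      have h1 : z ∈ Function.support g := h
      rw [hsupp] at h1
      exact h1 hz
    set D : ℝ := 1 + ∑ i ∈ Finset.range (k + 1), ‖iteratedFDeriv ℝ i g z‖ with hD
    have hD1 : 1 ≤ D := by
      have : 0 ≤ ∑ i ∈ Finset.range (k + 1), ‖iteratedFDeriv ℝ i g z‖ :=
        Finset.sum_nonneg fun _ _ => norm_nonneg _
      linarith
    have key := norm_iteratedFDeriv_comp_le (𝕜 := ℝ) (n := k) (N := ((⊤ : ℕ∞) : WithTop ℕ∞))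
      (expNegInvGlue.contDiff (n := (⊤ : ℕ∞))) hg (by exact_mod_cast le_top) z (C := 0) (D := D)
      (fun i _ => by rw [gz, flat_expNegInvGlue]; simp)
      (fun i hi hik => by
        have h1 : ‖iteratedFDeriv ℝ i g z‖ ≤
            ∑ i ∈ Finset.range (k + 1), ‖iteratedFDeriv ℝ i g z‖ :=
          Finset.single_le_sum (f := fun i => ‖iteratedFDeriv ℝ i g z‖)
            (fun _ _ => norm_nonneg _) (Finset.mem_range.2 (by omega))
        have h2 : D ≤ D ^ i := le_self_pow₀ hD1 (by omega)
        linarith)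
    rw [mul_zero, zero_mul] at key
    exact norm_le_zero_iff.1 key
end

section
/- Let n ∈ ℕ and let U ⊆ ℝⁿ be an open subset. Then there exists a Schwartz function f on ℝⁿ such that every iterated derivative of f vanishes at every point of ℝⁿ \ U (f is flat at ℝⁿ \ U) and f(x) > 0 for every x ∈ U; that is, there exists f ∈ 𝒮(U) which is strictly positive on all of U. -/
open scoped ContDiff in
theorem stmt_10_aux {E : Type*} [NormedAddCommGroup E] [NormedSpace ℝ E] (U : Set E)
    (g : ℕ → SchwartzMap E ℝ) (hz : ∀ n, tsupport (g n) ⊆ U) (h0 : ∀ n x, 0 ≤ g n x)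
    (hp : ∀ x ∈ U, ∃ n, g n x ≠ 0) :
    ∃ f : SchwartzMap E ℝ,
      (∀ z ∉ U, ∀ k : ℕ, iteratedFDeriv ℝ k (⇑f) z = 0) ∧ ∀ x ∈ U, 0 < f x := by
  let p : ℕ → ℕ → ℕ → ℝ := fun k l n => SchwartzMap.seminorm ℝ k l (g n)
  have p0 : ∀ k l n, 0 ≤ p k l n := fun k l n => apply_nonneg _ _
  let M : ℕ → ℝ := fun n =>
    1 + ∑ k ∈ Finset.range (n + 1), ∑ l ∈ Finset.range (n + 1), p k l n
  have M1 : ∀ n, 0 < M n := fun n => by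
    have : 0 ≤ ∑ k ∈ Finset.range (n + 1), ∑ l ∈ Finset.range (n + 1), p k l n :=
      Finset.sum_nonneg fun k _ => Finset.sum_nonneg fun l _ => p0 k l n
    simp only [M]; linarith
  have pM : ∀ n k l, k ≤ n → l ≤ n → p k l n ≤ M n := fun n k l hk hl => by
    have h1 : p k l n ≤ ∑ l ∈ Finset.range (n + 1), p k l n :=
      Finset.single_le_sum (f := fun l => p k l n) (fun l _ => p0 k l n)
        (Finset.mem_range.2 (by omega))
    have h2 : ∑ l ∈ Finset.range (n + 1), p k l n
        ≤ ∑ k ∈ Finset.range (n + 1), ∑ l ∈ Finset.range (n + 1), p k l n :=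
      Finset.single_le_sum (f := fun k => ∑ l ∈ Finset.range (n + 1), p k l n)
        (fun k _ => Finset.sum_nonneg fun l _ => p0 k l n) (Finset.mem_range.2 (by omega))
    simp only [M]; linarith
  let r : ℕ → ℝ := fun n => (1 / 2) ^ n / M n
  have r0 : ∀ n, 0 < r n := fun n => div_pos (by positivity) (M1 n)
  have rs : ∀ k l, Summable fun n => r n * p k l n := fun k l => by
    refine Summable.of_norm_bounded_eventually_nat (g := fun n => (1 / 2 : ℝ) ^ n)
      (summable_geometric_of_lt_one (by norm_num) (by norm_num)) ?_
    filter_upwards [Filter.eventually_ge_atTop (max k l)] with n hn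
    rw [Real.norm_of_nonneg (mul_nonneg (r0 n).le (p0 k l n))]
    calc r n * p k l n ≤ r n * M n := by
          gcongr
          · exact pM n k l (le_trans (le_max_left _ _) hn) (le_trans (le_max_right _ _) hn)
      _ = (1 / 2) ^ n := div_mul_cancel₀ _ (M1 n).ne'
  let h : ℕ → SchwartzMap E ℝ := fun n => r n • g n
  have hb : ∀ k l n x, ‖x‖ ^ k * ‖iteratedFDeriv ℝ l (h n) x‖ ≤ r n * p k l n := by
    intro k l n x
    refine (SchwartzMap.le_seminorm ℝ k l (h n) x).trans ?_
    simp only [h, map_smul_eq_mul, Real.norm_of_nonneg (r0 n).le]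
    rfl
  have hb0 : ∀ l n x, ‖iteratedFDeriv ℝ l (h n) x‖ ≤ r n * p 0 l n := by
    intro l n x
    simpa using hb 0 l n x
  have hd : ∀ n, ContDiff ℝ ((⊤ : ℕ∞) : WithTop ℕ∞) (h n) := fun n => (h n).smooth ⊤
  have key : ∀ (l : ℕ) x, iteratedFDeriv ℝ l (fun y => ∑' n, h n y) x
      = ∑' n, iteratedFDeriv ℝ l (h n) x := fun l x =>
    iteratedFDeriv_tsum_apply (N := ⊤) hd (v := fun l n => r n * p 0 l n)
      (fun l _ => rs 0 l) (fun l n x _ => hb0 l n x) le_top x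
  refine ⟨⟨fun y => ∑' n, h n y, ?_, ?_⟩, ?_, ?_⟩
  · exact contDiff_tsum (N := ⊤) hd (v := fun l n => r n * p 0 l n)
      (fun l _ => rs 0 l) (fun l n x _ => hb0 l n x)
  · intro k l
    refine ⟨∑' n, r n * p k l n, fun x => ?_⟩
    rw [key]
    have s1 : Summable fun n => ‖iteratedFDeriv ℝ l (h n) x‖ :=
      Summable.of_nonneg_of_le (fun _ => norm_nonneg _) (fun n => hb0 l n x) (rs 0 l)
    calc ‖x‖ ^ k * ‖∑' n, iteratedFDeriv ℝ l (h n) x‖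
        ≤ ‖x‖ ^ k * ∑' n, ‖iteratedFDeriv ℝ l (h n) x‖ := by
          gcongr
          exact norm_tsum_le_tsum_norm s1
      _ = ∑' n, ‖x‖ ^ k * ‖iteratedFDeriv ℝ l (h n) x‖ := by rw [tsum_mul_left]
      _ ≤ _ := (s1.mul_left _).tsum_le_tsum (fun n => hb k l n x) (rs k l)
  · intro z hzU k
    change iteratedFDeriv ℝ k (fun y => ∑' n, h n y) z = 0
    rw [key]
    have : ∀ n, iteratedFDeriv ℝ k (h n) z = 0 := by
      intro n
      by_contra hne
      have h1 : z ∈ tsupport (h n) := support_iteratedFDeriv_subset (𝕜 := ℝ) k hne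
      refine hzU (hz n (closure_mono ?_ h1))
      intro y hy hgy
      exact hy (by simp [h, hgy])
    simp [this]
  · intro x hx
    change 0 < ∑' n, h n x
    obtain ⟨n, hn⟩ := hp x hx
    have s : Summable fun n => h n x := by
      refine Summable.of_norm_bounded (rs 0 0) fun n => ?_
      simpa using hb0 0 n x
    refine s.tsum_pos (fun i => ?_) n ?_
    · exact mul_nonneg (r0 i).le (h0 i x)
    · exact mul_pos (r0 n) (lt_of_le_of_ne (h0 n x) (Ne.symm hn))

/-- For every open `U ⊆ ℝⁿ` there is a Schwartz function on `ℝⁿ`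
which is flat at `ℝⁿ \ U` (all iterated derivatives vanish there) and strictly
positive on `U`; i.e. `𝒮(U)` contains a strictly positive function. -/
theorem stmt_10 (n : ℕ) (U : Set (EuclideanSpace ℝ (Fin n))) (hU : IsOpen U) :
    ∃ f : SchwartzMap (EuclideanSpace ℝ (Fin n)) ℝ,
      (∀ z ∉ U, ∀ k : ℕ, iteratedFDeriv ℝ k (⇑f) z = 0) ∧ ∀ x ∈ U, 0 < f x := by
  have hex : ∀ x : U, ∃ f : SchwartzMap (EuclideanSpace ℝ (Fin n)) ℝ,
      tsupport f ⊆ U ∧ (∀ y, 0 ≤ f y) ∧ f x = 1 := by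
    intro x
    obtain ⟨f, h1, h2, h3, h4, h5⟩ :=
      exists_contDiff_tsupport_subset (n := ⊤) (hU.mem_nhds x.2)
    exact ⟨h2.toSchwartzMap h3, h1, fun y => (h4 (Set.mem_range_self y)).1, h5⟩
  choose F hF1 hF2 hF3 using hex
  obtain ⟨T, hTc, hT⟩ := TopologicalSpace.isOpen_iUnion_countable
    (fun x : U => Function.support (F x)) (fun x => (F x).continuous.isOpen_support)
  have hcov : ∀ x ∈ U, ∃ t ∈ T, F t x ≠ 0 := by
    intro x hx
    have : x ∈ ⋃ t ∈ T, Function.support (F t) := by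
      rw [hT]
      exact Set.mem_iUnion.2 ⟨⟨x, hx⟩, by
        rw [Function.mem_support, hF3 ⟨x, hx⟩]; exact one_ne_zero⟩
    simpa using this
  rcases T.eq_empty_or_nonempty with rfl | hne
  · refine stmt_10_aux U (fun _ => 0) (fun _ => ?_) (fun _ _ => le_rfl) fun x hx => ?_
    · have : tsupport ((0 : SchwartzMap (EuclideanSpace ℝ (Fin n)) ℝ) : _ → ℝ) = ∅ :=
        tsupport_eq_empty_iff.2 rfl
      rw [this]; exact Set.empty_subset _
    · obtain ⟨t, ht, -⟩ := hcov x hx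
      exact ht.elim
  · obtain ⟨g0, hg⟩ := hTc.exists_eq_range hne
    refine stmt_10_aux U (fun n => F (g0 n)) (fun n => hF1 _) (fun n => hF2 _) fun x hx => ?_
    obtain ⟨t, ht, h⟩ := hcov x hx
    rw [hg] at ht
    obtain ⟨m, rfl⟩ := ht
    exact ⟨m, h⟩
end

section
/- Let n ≥ 1 and let U ⊆ ℝⁿ be a nonempty open bounded subset. Then the Hausdorff dimension of the boundary ∂U = closure(U) \ U of U is at least n − 1. -/
open scoped ENNReal

/-- The boundary of a nonempty open bounded subset of `ℝⁿ` (`n ≥ 1`)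
has Hausdorff dimension at least `n - 1`. -/
theorem stmt_11 (n : ℕ) (hn : 1 ≤ n) (U : Set (EuclideanSpace ℝ (Fin n)))
    (hU : IsOpen U) (hne : U.Nonempty) (hb : Bornology.IsBounded U) :
    (n : ℝ≥0∞) - 1 ≤ dimH (frontier U) := by
  obtain ⟨m, rfl⟩ : ∃ m, n = m + 1 := ⟨n - 1, by omega⟩
  let P : EuclideanSpace ℝ (Fin (m + 1)) →L[ℝ] (Fin m → ℝ) :=
    ContinuousLinearMap.pi fun i => EuclideanSpace.proj (i.succ)
  have hP : ∀ x i, P x i = x i.succ := fun x i => rfl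
  have hsurj : Function.Surjective P := by
    intro y
    refine ⟨WithLp.toLp 2 (Fin.cons 0 y), ?_⟩
    ext i
    simp [hP]
  have hopen : IsOpen (P '' U) := P.isOpenMap hsurj U hU
  have hsub : P '' U ⊆ P '' frontier U := by
    rintro _ ⟨x, hx, rfl⟩
    let v : EuclideanSpace ℝ (Fin (m + 1)) := EuclideanSpace.single 0 1
    have hv : ‖v‖ = 1 := by simp [v]
    have hPv : P v = 0 := by
      ext i
      simp [hP, v]
    let f : ℝ → EuclideanSpace ℝ (Fin (m + 1)) := fun t => x + t • v
    have hf : Continuous f := by fun_prop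
    have hc : IsPreconnected (Set.range f) := isPreconnected_range hf
    obtain ⟨R, hR⟩ := hb.exists_norm_le
    have h1 : (Set.range f ∩ U).Nonempty := ⟨x, ⟨0, by simp [f]⟩, hx⟩
    have h2 : (Set.range f ∩ Uᶜ).Nonempty := by
      refine ⟨f (2 * R + 1), ⟨_, rfl⟩, fun h => ?_⟩
      have h3 := hR _ h
      have h4 := hR _ hx
      have h5 : ‖(2 * R + 1) • v‖ ≤ ‖f (2 * R + 1)‖ + ‖x‖ := by
        have : (2 * R + 1) • v = f (2 * R + 1) - x := by simp [f]
        rw [this]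
        exact norm_sub_le _ _
      rw [norm_smul, hv, mul_one, Real.norm_eq_abs] at h5
      have := le_abs_self (2 * R + 1)
      linarith
    have key : ∃ y ∈ Set.range f, y ∈ frontier U := by
      by_contra hcon
      push Not at hcon
      have hcl : ∀ y ∈ Set.range f, y ∉ U → y ∈ (closure U)ᶜ := by
        intro y hy hyU hyc
        apply hcon y hy
        rw [hU.frontier_eq]
        exact ⟨hyc, hyU⟩
      obtain ⟨z, hz, hzU⟩ := h2
      obtain ⟨w, -, hw1, hw2⟩ := hc U (closure U)ᶜ hU isClosed_closure.isOpen_compl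
        (fun y hy => (Classical.em (y ∈ U)).imp id (hcl y hy)) h1 ⟨z, hz, hcl z hz hzU⟩
      exact hw2 (subset_closure hw1)
    obtain ⟨_, ⟨t, rfl⟩, ht⟩ := key
    exact ⟨_, ht, by simp [f, hPv]⟩
  have h := dimH_mono hsub
  rw [Real.dimH_of_nonempty_interior (by rw [hopen.interior_eq]; exact hne.image _)] at h
  have h' := h.trans (P.lipschitz.dimH_image_le _)
  simpa using h'
end

section
/- Let n ∈ ℕ and let A₀, A₁ ⊆ ℝⁿ be nonempty closed subsets. Then there exists a smooth function φ on the open set ℝⁿ \ (A₀ ∩ A₁) such that φ = 0 on A₀ \ (A₀ ∩ A₁), φ = 1 on A₁ \ (A₀ ∩ A₁), and for every k ∈ ℕ there exists a constant C_k > 0 such that ‖D^k φ(x)‖ ≤ C_k · d(x)^{−k} for every x ∈ ℝⁿ \ (A₀ ∩ A₁), where d(x) = max(dist(x, A₀), dist(x, A₁)) and D^k φ denotes the k-th iterated derivative of φ. -/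
open Metric Set Filter Topology in
lemma packing_aux (n : ℕ) : ∃ K : ℕ, ∀ (ι : Type) (p : ι → EuclideanSpace ℝ (Fin n))
    (T : Set ι) (x : EuclideanSpace ℝ (Fin n)) (r : ℝ), 0 < r →
    (∀ z ∈ T, dist (p z) x ≤ r) →
    (∀ z ∈ T, ∀ w ∈ T, z ≠ w → r / 16 ≤ dist (p z) (p w)) →
    T.Finite ∧ T.ncard ≤ K := by
  obtain ⟨t, -, htf, ht⟩ := (isCompact_closedBall (0 : EuclideanSpace ℝ (Fin n)) 1).finite_cover_balls
    (e := 1 / 32) (by norm_num)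
  refine ⟨t.ncard, ?_⟩
  intro ι p T x r hr hT hsep
  have h1 : ∀ z ∈ T, ∃ y ∈ t, dist (r⁻¹ • (p z - x)) y < 1 / 32 := by
    intro z hz
    have : r⁻¹ • (p z - x) ∈ closedBall (0 : EuclideanSpace ℝ (Fin n)) 1 := by
      rw [mem_closedBall_zero_iff, norm_smul, ← dist_eq_norm, Real.norm_of_nonneg (by positivity),
        inv_mul_le_iff₀ hr]
      simpa using hT z hz
    simpa using ht this
  choose! F hF1 hF2 using h1
  have hinj : Set.InjOn F T := by
    intro z hz w hw hzw
    by_contra hne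
    have h2 := hsep z hz w hw hne
    have h3 := hF2 z hz
    have h4 := hF2 w hw
    rw [← hzw] at h4
    have h5 := dist_triangle_right (r⁻¹ • (p z - x)) (r⁻¹ • (p w - x)) (F z)
    have h6 : dist (r⁻¹ • (p z - x)) (r⁻¹ • (p w - x)) = r⁻¹ * dist (p z) (p w) := by
      rw [dist_smul₀, Real.norm_of_nonneg (by positivity), dist_sub_right]
    rw [h6] at h5
    have h7 : r⁻¹ * dist (p z) (p w) < 1 / 16 := by linarith
    rw [inv_mul_lt_iff₀ hr] at h7
    linarith
  exact ⟨Set.Finite.of_injOn hF1 hinj htf, Set.ncard_le_ncard_of_injOn F hF1 hinj htf⟩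

lemma bump_scale_aux {n : ℕ} (ψ : EuclideanSpace ℝ (Fin n) → ℝ) (hψ : ContDiff ℝ (⊤ : ℕ∞) ψ)
    (k : ℕ) (C : ℝ) (hC : ∀ x, ‖iteratedFDeriv ℝ k ψ x‖ ≤ C) (c : ℝ) (hc : 0 ≤ c)
    (z x : EuclideanSpace ℝ (Fin n)) :
    ‖iteratedFDeriv ℝ k (fun x => ψ (c • (x - z))) x‖ ≤ C * c ^ k := by
  let L : EuclideanSpace ℝ (Fin n) →L[ℝ] EuclideanSpace ℝ (Fin n) :=
    c • ContinuousLinearMap.id ℝ _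
  have hL : ‖L‖ ≤ c := by
    refine ContinuousLinearMap.opNorm_le_bound _ hc fun x => ?_
    simp [L, norm_smul, abs_of_nonneg hc]
  have e : iteratedFDeriv ℝ k (fun x => ψ (c • (x - z))) x
      = iteratedFDeriv ℝ k (ψ ∘ L) (x - z) := by
    rw [← iteratedFDeriv_comp_sub]
    rfl
  rw [e, ContinuousLinearMap.iteratedFDeriv_comp_right L hψ _ (by exact_mod_cast le_top)]
  refine (ContinuousMultilinearMap.norm_compContinuousLinearMap_le _ _).trans ?_
  rw [Finset.prod_const, Finset.card_univ, Fintype.card_fin]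
  have := hC (L (x - z))
  have h0 : 0 ≤ C := (norm_nonneg _).trans this
  gcongr

lemma maximal_aux {E : Type*} [MetricSpace E] (B : Set E) (d : E → ℝ) :
    ∃ S ⊆ B, (∀ z ∈ S, ∀ w ∈ S, z ≠ w → min (d z) (d w) / 8 ≤ dist z w) ∧
      ∀ a ∈ B, 0 < d a → ∃ z ∈ S, dist a z ≤ d z / 8 := by
  let R : E → E → Prop := fun z w => min (d z) (d w) / 8 ≤ dist z w
  obtain ⟨S, hS⟩ := zorn_subset {s : Set E | s ⊆ B ∧ s.Pairwise R} (by
    intro c hc hch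
    refine ⟨⋃₀ c, ⟨Set.sUnion_subset fun s hs => (hc hs).1, ?_⟩,
      fun s hs => Set.subset_sUnion_of_mem hs⟩
    exact (Set.pairwise_sUnion hch.directedOn).2 fun s hs => (hc hs).2)
  refine ⟨S, hS.prop.1, fun z hz w hw h => hS.prop.2 hz hw h, ?_⟩
  intro a ha hd
  by_contra! hcon
  have hmem : insert a S ∈ {s : Set E | s ⊆ B ∧ s.Pairwise R} := by
    refine ⟨Set.insert_subset ha hS.prop.1, hS.prop.2.insert fun b hb _ => ?_⟩
    have := hcon b hb
    have h2 := min_le_right (d a) (d b)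
    constructor
    · show min (d a) (d b) / 8 ≤ dist a b
      linarith
    · show min (d b) (d a) / 8 ≤ dist b a
      rw [min_comm, dist_comm]
      linarith
  have haS : a ∈ S := hS.le_of_ge hmem (Set.subset_insert _ _) (Set.mem_insert _ _)
  have := hcon a haS
  rw [dist_self] at this
  linarith

open Metric Set Filter Topology in
set_option maxHeartbeats 1000000 in
theorem main_aux (n : ℕ) (A₀ A₁ : Set (EuclideanSpace ℝ (Fin n)))
    (h₀ : IsClosed A₀) (h₁ : IsClosed A₁) (hne₀ : A₀.Nonempty) (hne₁ : A₁.Nonempty) :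
    ∃ φ : EuclideanSpace ℝ (Fin n) → ℝ,
      ContDiffOn ℝ (⊤ : ℕ∞) φ (A₀ ∩ A₁)ᶜ ∧
      (∀ x ∈ A₀ \ (A₀ ∩ A₁), φ x = 0) ∧
      (∀ x ∈ A₁ \ (A₀ ∩ A₁), φ x = 1) ∧
      ∀ k : ℕ, ∃ C : ℝ, 0 < C ∧ ∀ x ∈ (A₀ ∩ A₁)ᶜ,
        ‖iteratedFDerivWithin ℝ k φ (A₀ ∩ A₁)ᶜ x‖ ≤
          C * (max (Metric.infDist x A₀) (Metric.infDist x A₁)) ^ (-(k : ℤ)) := by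
  set d : EuclideanSpace ℝ (Fin n) → ℝ := fun x => max (infDist x A₀) (infDist x A₁) with hd
  have hlip : ∀ x y, d x ≤ d y + dist x y := by
    intro x y
    have a := infDist_le_infDist_add_dist (s := A₀) (x := x) (y := y)
    have b := infDist_le_infDist_add_dist (s := A₁) (x := x) (y := y)
    have a' := le_max_left (infDist y A₀) (infDist y A₁)
    have b' := le_max_right (infDist y A₀) (infDist y A₁)
    exact max_le (by simp only [hd]; linarith) (by simp only [hd]; linarith)
  have hpos : ∀ x ∈ (A₀ ∩ A₁)ᶜ, 0 < d x := by
    intro x hx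
    by_contra! h
    apply hx
    have a := (le_max_left _ _).trans h
    have b := (le_max_right _ _).trans h
    exact ⟨(h₀.mem_iff_infDist_zero hne₀).2 (le_antisymm a infDist_nonneg),
      (h₁.mem_iff_infDist_zero hne₁).2 (le_antisymm b infDist_nonneg)⟩
  have hopen : IsOpen (A₀ ∩ A₁)ᶜ := (h₀.inter h₁).isOpen_compl
  obtain ⟨S, hSB, hsep, hcov⟩ := maximal_aux (A₁ \ A₀) d
  have hSpos : ∀ z ∈ S, 0 < d z := fun z hz => hpos z fun h => (hSB hz).2 h.1
  obtain ⟨K, hK⟩ := packing_aux n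
  let ψ : ContDiffBump (0 : EuclideanSpace ℝ (Fin n)) := ⟨1 / 8, 1 / 4, by norm_num, by norm_num⟩
  have hψ : ContDiff ℝ (⊤ : ℕ∞) ψ := ψ.contDiff
  have hψb : ∀ k, ∃ C, ∀ x, ‖iteratedFDeriv ℝ k ψ x‖ ≤ C := fun k =>
    (hψ.continuous_iteratedFDeriv (by exact_mod_cast le_top)).bounded_above_of_compact_support
      (ψ.hasCompactSupport.iteratedFDeriv k)
  choose Cψ hCψ using hψb
  have hCψ0 : ∀ k, 0 ≤ Cψ k := fun k => (norm_nonneg _).trans (hCψ k 0)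
  let p : S → EuclideanSpace ℝ (Fin n) → ℝ := fun z x => ψ ((d z)⁻¹ • (x - z))
  have hnorm : ∀ (z : S) x, dist ((d z)⁻¹ • (x - (z : EuclideanSpace ℝ (Fin n)))) 0
      = dist x z / d z := by
    intro z x
    rw [dist_zero_right, norm_smul, Real.norm_of_nonneg (inv_nonneg.2 (hSpos z z.2).le),
      ← dist_eq_norm, inv_mul_eq_div]
  have hp0 : ∀ (z : S) (x : EuclideanSpace ℝ (Fin n)), d z / 4 ≤ dist x z → p z x = 0 := by
    intro z x h
    apply ψ.zero_of_le_dist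
    rw [hnorm, le_div_iff₀ (hSpos z z.2)]
    show 1 / 4 * d z ≤ _
    linarith
  have hp1 : ∀ (z : S) (x : EuclideanSpace ℝ (Fin n)), dist x z ≤ d z / 8 → p z x = 1 := by
    intro z x h
    apply ψ.one_of_mem_closedBall
    rw [mem_closedBall, hnorm, div_le_iff₀ (hSpos z z.2)]
    show _ ≤ 1 / 8 * d z
    linarith
  have hpc : ∀ z : S, ContDiff ℝ (⊤ : ℕ∞) (p z) := fun z =>
    hψ.comp ((contDiff_id.sub contDiff_const).const_smul _)
  let M : EuclideanSpace ℝ (Fin n) → ℝ := fun x => ∑ᶠ z : S, p z x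
  -- local description
  have hloc : ∀ x₀ ∈ (A₀ ∩ A₁)ᶜ, ∃ T : Finset S, T.card ≤ K ∧ (∀ z ∈ T, d x₀ / 2 ≤ d z) ∧
      ∀ x ∈ ball x₀ (d x₀ / 8), ∀ z : S, p z x ≠ 0 → z ∈ T := by
    intro x₀ hx₀
    have hr := hpos x₀ hx₀
    set r := d x₀ with hrdef
    have hd2 : ∀ z : EuclideanSpace ℝ (Fin n), dist z x₀ ≤ r / 2 → r / 2 ≤ d z := by
      intro z hz
      have := hlip x₀ z
      rw [dist_comm] at this
      linarith
    obtain ⟨hfin, hcard⟩ := hK S (fun z => z) {z : S | dist (z : EuclideanSpace ℝ (Fin n)) x₀ ≤ r / 2}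
      x₀ r hr (fun z hz => by have : dist (z : EuclideanSpace ℝ (Fin n)) x₀ ≤ r / 2 := hz
                              linarith)
      (fun z hz w hw hne => by
        have h1 := hsep z z.2 w w.2 (fun h => hne (Subtype.ext h))
        have h2 := le_min (hd2 z hz) (hd2 w hw)
        linarith)
    refine ⟨hfin.toFinset, by rwa [← Set.ncard_eq_toFinset_card _ hfin], ?_, ?_⟩
    · intro z hz
      exact hd2 z (by simpa using hz)
    · intro x hx
      intro z hz
      rw [Set.Finite.mem_toFinset]
      show dist (z : EuclideanSpace ℝ (Fin n)) x₀ ≤ r / 2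
      have h1 : dist x z < d z / 4 := by
        by_contra! h
        exact hz (hp0 z x h)
      have h2 : dist x x₀ < r / 8 := hx
      have h3 := hlip x x₀
      have h4 := hlip z x
      rw [dist_comm] at h4
      have h5 := dist_triangle_left (z : EuclideanSpace ℝ (Fin n)) x₀ x
      linarith
  have hloc' : ∀ x₀ ∈ (A₀ ∩ A₁)ᶜ, ∃ T : Finset S, T.card ≤ K ∧ (∀ z ∈ T, d x₀ / 2 ≤ d z) ∧
      M x₀ = ∑ z ∈ T, p z x₀ ∧ (∀ z : S, p z x₀ ≠ 0 → z ∈ T) ∧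
      (fun x => Real.smoothTransition (M x)) =ᶠ[𝓝 x₀]
        Real.smoothTransition ∘ (fun x => ∑ z ∈ T, p z x) := by
    intro x₀ hx₀
    obtain ⟨T, h1, h2, h4⟩ := hloc x₀ hx₀
    have h3 : ∀ x ∈ ball x₀ (d x₀ / 8), M x = ∑ z ∈ T, p z x := fun x hx =>
      finsum_eq_sum_of_support_subset _ fun z hz => h4 x hx z hz
    have hr := hpos x₀ hx₀
    refine ⟨T, h1, h2, h3 _ (mem_ball_self (by linarith)),
      h4 _ (mem_ball_self (by linarith)), ?_⟩
    filter_upwards [ball_mem_nhds x₀ (show 0 < d x₀ / 8 by linarith)] with x hx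
    simp [h3 x hx]
  have hsum : ∀ T : Finset S, ContDiff ℝ (⊤ : ℕ∞) (fun x => ∑ z ∈ T, p z x) := fun T =>
    ContDiff.sum fun z _ => hpc z
  have hst : ContDiff ℝ (⊤ : ℕ∞) Real.smoothTransition := Real.smoothTransition.contDiff
  refine ⟨fun x => Real.smoothTransition (M x), ?_, ?_, ?_, ?_⟩
  · intro x hx
    obtain ⟨T, -, -, -, -, h⟩ := hloc' x hx
    exact ((hst.comp (hsum T)).contDiffAt.congr_of_eventuallyEq h).contDiffWithinAt
  · intro x hx
    have : M x = 0 := by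
      have : ∀ z : S, p z x = 0 := by
        intro z
        apply hp0
        have h1 := infDist_le_dist_of_mem (x := (z : EuclideanSpace ℝ (Fin n))) hx.1
        have h2 := infDist_zero_of_mem (hSB z.2).1
        have h3 : d z = infDist (z : EuclideanSpace ℝ (Fin n)) A₀ := by
          simp only [hd]
          rw [h2, max_eq_left infDist_nonneg]
        have h4 := hSpos z z.2
        rw [dist_comm]
        linarith
      simp [M, this]
    simp [this]
  · intro x hx
    have hx0 : x ∉ A₀ := fun h => hx.2 ⟨h, hx.1⟩
    have hxc : x ∈ (A₀ ∩ A₁)ᶜ := hx.2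
    obtain ⟨z, hz, hxz⟩ := hcov x ⟨hx.1, hx0⟩ (hpos x hxc)
    obtain ⟨T, -, -, h, hT, -⟩ := hloc' x hxc
    apply Real.smoothTransition.one_of_one_le
    have h1 := hp1 ⟨z, hz⟩ x hxz
    have hzT : (⟨z, hz⟩ : S) ∈ T := hT _ (by rw [h1]; exact one_ne_zero)
    rw [h, ← h1]
    exact Finset.single_le_sum (f := fun z => p z x) (fun z _ => ψ.nonneg) hzT
  · intro k
    -- bounds on the smooth transition
    have hb : ∀ i, ∃ C, ∀ y ∈ Icc (0 : ℝ) K, ‖iteratedFDeriv ℝ i Real.smoothTransition y‖ ≤ C :=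
      fun i => isCompact_Icc.exists_bound_of_continuousOn
        (hst.continuous_iteratedFDeriv (by exact_mod_cast le_top)).continuousOn
    choose B hB using hb
    set C := ∑ i ∈ Finset.range (k + 1), |B i| with hCdef
    set D := 1 + ∑ i ∈ Finset.range (k + 1), K * (Cψ i * 2 ^ i) with hDdef
    have hC0 : 0 ≤ C := Finset.sum_nonneg fun _ _ => abs_nonneg _
    have hD1 : 1 ≤ D := by
      have : 0 ≤ ∑ i ∈ Finset.range (k + 1), K * (Cψ i * 2 ^ i) :=
        Finset.sum_nonneg fun i _ => by have := hCψ0 i; positivity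
      linarith
    refine ⟨k.factorial * (C + 1) * D ^ k, by positivity, ?_⟩
    intro x hx
    have hr := hpos x hx
    obtain ⟨T, hTc, hTd, hM, -, hev⟩ := hloc' x hx
    show _ ≤ k.factorial * (C + 1) * D ^ k * (d x) ^ (-(k : ℤ))
    rw [iteratedFDerivWithin_of_isOpen k hopen hx, (hev.iteratedFDeriv (𝕜 := ℝ) k).eq_of_nhds]
    have hTK : (T.card : ℝ) ≤ K := by exact_mod_cast hTc
    have key := norm_iteratedFDeriv_comp_le (n := k) hst (hsum T) (by exact_mod_cast le_top) x
      (C := C) (D := D / d x) ?_ ?_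
    · refine key.trans ?_
      rw [div_pow, zpow_neg, zpow_natCast, ← div_eq_mul_inv, mul_div_assoc]
      gcongr
      linarith
    · intro i hi
      refine (hB i _ ⟨Finset.sum_nonneg fun z _ => ψ.nonneg, ?_⟩).trans ?_
      · refine (Finset.sum_le_card_nsmul _ _ 1 fun z _ => ψ.le_one).trans ?_
        simpa using hTc
      · refine (le_abs_self _).trans ?_
        exact Finset.single_le_sum (f := fun i => |B i|) (fun _ _ => abs_nonneg _)
          (Finset.mem_range.2 (by omega))
    · intro i hi1 hi
      have e : iteratedFDeriv ℝ i (fun x => ∑ z ∈ T, p z x) x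
          = ∑ z ∈ T, iteratedFDeriv ℝ i (p z) x := by
        exact iteratedFDeriv_fun_sum_apply fun z _ =>
          ((hpc z).of_le (by exact_mod_cast le_top)).contDiffAt
      rw [e]
      have hb1 : ∀ z ∈ T, ‖iteratedFDeriv ℝ i (p z) x‖ ≤ Cψ i * 2 ^ i / d x ^ i := by
        intro z hz
        refine (bump_scale_aux ψ hψ i (Cψ i) (hCψ i) (d z)⁻¹
          (inv_nonneg.2 (hSpos z z.2).le) z x).trans ?_
        rw [mul_div_assoc, ← div_pow]
        have := hCψ0 i
        have h5 : (d z)⁻¹ ≤ 2 / d x := by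
          have := inv_anti₀ (by linarith) (hTd z hz)
          rwa [inv_div] at this
        have := hSpos z z.2
        gcongr
      refine (norm_sum_le_of_le T hb1).trans ?_
      rw [Finset.sum_const, nsmul_eq_mul, div_pow, ← mul_div_assoc]
      gcongr
      have h6 : K * (Cψ i * 2 ^ i) ≤ D := by
        have := Finset.single_le_sum (f := fun i => K * (Cψ i * 2 ^ i))
          (fun i _ => by have := hCψ0 i; positivity) (Finset.mem_range.2 (show i < k + 1 by omega))
        linarith
      have h7 : D ≤ D ^ i := le_self_pow₀ hD1 (by omega)
      have := hCψ0 i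
      refine le_trans ?_ (h6.trans h7)
      gcongr


/-- **Hörmander's lemma.** For nonempty closed `A₀, A₁ ⊆ ℝⁿ` there is a
smooth function `φ` on `Ω = ℝⁿ \ (A₀ ∩ A₁)` with `φ = 0` on `A₀ \ (A₀ ∩ A₁)`,
`φ = 1` on `A₁ \ (A₀ ∩ A₁)`, and whose `k`-th iterated derivative is bounded by
`C_k · d(x)^{-k}` where `d(x) = max(dist(x, A₀), dist(x, A₁))`. -/
theorem stmt_13 (n : ℕ) (A₀ A₁ : Set (EuclideanSpace ℝ (Fin n)))
    (h₀ : IsClosed A₀) (h₁ : IsClosed A₁) (hne₀ : A₀.Nonempty) (hne₁ : A₁.Nonempty) :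
    ∃ φ : EuclideanSpace ℝ (Fin n) → ℝ,
      ContDiffOn ℝ (⊤ : ℕ∞) φ (A₀ ∩ A₁)ᶜ ∧
      (∀ x ∈ A₀ \ (A₀ ∩ A₁), φ x = 0) ∧
      (∀ x ∈ A₁ \ (A₀ ∩ A₁), φ x = 1) ∧
      ∀ k : ℕ, ∃ C : ℝ, 0 < C ∧ ∀ x ∈ (A₀ ∩ A₁)ᶜ,
        ‖iteratedFDerivWithin ℝ k φ (A₀ ∩ A₁)ᶜ x‖ ≤
          C * (max (Metric.infDist x A₀) (Metric.infDist x A₁)) ^ (-(k : ℤ)) := by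
  exact main_aux n A₀ A₁ h₀ h₁ hne₀ hne₁
end

section
/- Define f : ℝ → ℝ by f(0) = 0 and f(x) = sin(e^{1/x²})·e^{−1/x²} for x ≠ 0. Then: (a) for every m ∈ ℕ there exists C > 0 such that |f(x)| ≤ C·|x|^m for all x ∈ ℝ with |x| ≤ 1; (b) f is smooth on ℝ \ {0}, but f is not continuously differentiable on ℝ: for every δ > 0 the derivative f' is unbounded on (0, δ). -/
/-- Let `f(0) = 0` and `f(x) = sin(e^{1/x²})·e^{-1/x²}` for `x ≠ 0`.
Then (a) `f` vanishes to infinite order at `0` in the sense of distance-decay bounds: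
for every `m` there is `C > 0` with `|f x| ≤ C·|x|^m` for `|x| ≤ 1`;
(b) `f` is smooth away from `0`, yet not `C¹` on `ℝ`, and its derivative is unbounded
on every interval `(0, δ)`. -/
theorem stmt_16 :
    ∀ f : ℝ → ℝ, f 0 = 0 →
      (∀ x : ℝ, x ≠ 0 → f x = Real.sin (Real.exp (1 / x ^ 2)) * Real.exp (-1 / x ^ 2)) →
      (∀ m : ℕ, ∃ C : ℝ, 0 < C ∧ ∀ x : ℝ, |x| ≤ 1 → |f x| ≤ C * |x| ^ m) ∧
      ContDiffOn ℝ (⊤ : ℕ∞) f {(0 : ℝ)}ᶜ ∧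
      ¬ ContDiff ℝ 1 f ∧
      ∀ δ : ℝ, 0 < δ → ∀ C : ℝ, ∃ x ∈ Set.Ioo (0 : ℝ) δ, C < |deriv f x| := by
  intro f h0 hf
  have hE : ∀ x : ℝ, Real.exp (-1 / x ^ 2) = (Real.exp (1 / x ^ 2))⁻¹ := by
    intro x
    rw [neg_div, Real.exp_neg]
  have hunb : ∀ δ : ℝ, 0 < δ → ∀ C : ℝ, ∃ x ∈ Set.Ioo (0 : ℝ) δ, C < |deriv f x| := by
    intro δ hδ C
    obtain ⟨s, hs1, hsδ, hsC, hs0, k, hk⟩ : ∃ s : ℝ, 1 < s ∧ 1 / δ < s ∧ C < s ∧ 0 < s ∧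
        ∃ k : ℕ, Real.exp (s ^ 2) = k * (2 * Real.pi) := by
      set M : ℝ := max 1 (max (1 / δ) C) with hM
      obtain ⟨k, hk⟩ := exists_nat_gt (Real.exp (M ^ 2))
      have hM1 : 1 ≤ M := le_max_left _ _
      have hMδ : 1 / δ ≤ M := (le_max_left _ _).trans (le_max_right _ _)
      have hMC : C ≤ M := (le_max_right _ _).trans (le_max_right _ _)
      have hpi := Real.pi_gt_three
      have hkpos : (0 : ℝ) < k := (Real.exp_pos _).trans hk
      have hpos : (0 : ℝ) < k * (2 * Real.pi) := by positivity
      have hlog : M ^ 2 < Real.log (k * (2 * Real.pi)) := by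
        rw [Real.lt_log_iff_exp_lt hpos]
        nlinarith
      have hs : M < Real.sqrt (Real.log (k * (2 * Real.pi))) := Real.lt_sqrt_of_sq_lt hlog
      refine ⟨Real.sqrt (Real.log (k * (2 * Real.pi))), by linarith, by linarith, by linarith,
        by linarith, k, ?_⟩
      rw [Real.sq_sqrt (by nlinarith), Real.exp_log hpos]
    have hx0 : s⁻¹ ≠ 0 := by positivity
    refine ⟨s⁻¹, ⟨by positivity, ?_⟩, ?_⟩
    · rw [inv_lt_comm₀ hs0 hδ]
      simpa using hsδ
    · have h1 : HasDerivAt (fun x : ℝ => 1 / x ^ 2) (-2 * s ^ 3) s⁻¹ := by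
        have := (hasDerivAt_const (s⁻¹) (1 : ℝ)).div (hasDerivAt_pow 2 (s⁻¹)) (by positivity)
        refine this.congr_deriv ?_
        have hsne : s ≠ 0 := hs0.ne'
        norm_num
        field_simp
      have h2 : HasDerivAt (fun x : ℝ => -1 / x ^ 2) (2 * s ^ 3) s⁻¹ := by
        have := h1.neg
        refine (this.congr_deriv (by ring)).congr_of_eventuallyEq ?_
        exact Filter.Eventually.of_forall fun x => by simp [neg_div]
      have h3 := h1.exp.sin.mul h2.exp
      have h4 : HasDerivAt f _ s⁻¹ := h3.congr_of_eventuallyEq (by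
        filter_upwards [isOpen_ne.mem_nhds hx0] with x hx
        exact hf x hx)
      have e1 : Real.exp (1 / s⁻¹ ^ 2) = k * (2 * Real.pi) := by
        rw [← hk]; congr 1; field_simp
      have hne : (k * (2 * Real.pi) : ℝ) ≠ 0 := by rw [← hk]; positivity
      have hsin : Real.sin (k * (2 * Real.pi)) = 0 := by
        have := Real.sin_nat_mul_pi (k * 2)
        push_cast at this
        rw [← this]; ring_nf
      have e5 : deriv f s⁻¹ = -2 * s ^ 3 := by
        rw [h4.deriv, hE, e1, hsin, Real.cos_nat_mul_two_pi]
        rw [one_mul, zero_mul, add_zero, mul_right_comm, mul_inv_cancel₀ hne, one_mul]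
      rw [e5, abs_mul, abs_of_pos (show 0 < s ^ 3 by positivity)]
      norm_num
      nlinarith [mul_pos hs0 hs0, mul_pos (mul_pos hs0 hs0) hs0, mul_pos hs0 (sub_pos.2 hs1), mul_pos (mul_pos hs0 hs0) (sub_pos.2 hs1)]
  refine ⟨?_, ?_, ?_, hunb⟩
  · intro m
    refine ⟨m.factorial, by positivity, ?_⟩
    intro x hx
    by_cases hx0 : x = 0
    · subst hx0
      rw [h0, abs_zero]
      positivity
    · rw [hf x hx0, hE, abs_mul]
      have hsin := Real.abs_sin_le_one (Real.exp (1 / x ^ 2))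
      have hxp : 0 < |x| := abs_pos.2 hx0
      have hexp := Real.pow_div_factorial_le_exp (1 / x ^ 2) (by positivity) m
      have hb : (Real.exp (1 / x ^ 2))⁻¹ ≤ m.factorial * |x| ^ m := by
        have : (Real.exp (1 / x ^ 2))⁻¹ ≤ ((1 / x ^ 2) ^ m / m.factorial)⁻¹ :=
          inv_anti₀ (by positivity) hexp
        refine this.trans ?_
        have e : ((1 / x ^ 2) ^ m / (m.factorial : ℝ))⁻¹ = m.factorial * (|x| ^ 2) ^ m := by
          rw [sq_abs, inv_div, one_div, inv_pow, div_inv_eq_mul]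
        rw [e]
        gcongr
        nlinarith
      rw [abs_of_pos (by positivity : 0 < (Real.exp (1 / x ^ 2))⁻¹)]
      have hp : 0 < (Real.exp (1 / x ^ 2))⁻¹ := by positivity
      nlinarith
  · have : ContDiffOn ℝ (⊤ : ℕ∞)
        (fun x : ℝ => Real.sin (Real.exp (1 / x ^ 2)) * Real.exp (-1 / x ^ 2)) {(0 : ℝ)}ᶜ := by
      have hp : ∀ x ∈ ({(0 : ℝ)}ᶜ : Set ℝ), x ^ 2 ≠ 0 := fun x hx => pow_ne_zero 2 hx
      have a : ∀ c : ℝ, ContDiffOn ℝ (⊤ : ℕ∞) (fun x : ℝ => c / x ^ 2) {(0 : ℝ)}ᶜ := fun c =>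
        contDiffOn_const.div (contDiff_id.pow 2).contDiffOn hp
      exact (a 1).exp.sin.mul (a (-1)).exp
    exact this.congr fun x hx => hf x hx
  · intro hc
    have hd : Continuous (deriv f) := hc.continuous_deriv le_rfl
    obtain ⟨C, hC⟩ := (isCompact_Icc (a := (0 : ℝ)) (b := 1)).exists_bound_of_continuousOn
      hd.continuousOn
    obtain ⟨x, hx, hlt⟩ := hunb 1 one_pos C
    have := hC x ⟨hx.1.le, hx.2.le⟩
    rw [Real.norm_eq_abs] at this
    linarith
end
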